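/- arXiv:2111.07114 — 2 statements merged into one kernel-verified Lean document; each statement's English description precedes it below -/
import Mathlib

section
/- (Batchelor–Wood formula) Assume ∫₀^{2π}f(θ)dθ=∫₀^{2π}g(θ)dθ=0. Suppose the nonlinear steady Prandtl equations near r=1 have a solution (u_p^{(0)},v_p^{(1)}) and those near r=r_0 have a solution (û_p^{(0)},v̂_p^{(1)}) such that u_e(1)+u_p^{(0)}(θ,Y)>0 for all Y≤0, u_e(r_0)+û_p^{(0)}(θ,Z)>0 for all Z≥0, and ‖u_p^{(0)}‖_∞+‖û_p^{(0)}‖_∞≤M for some constant M>0. Then u_e(1)²=α²+(η²/2π)∫₀^{2π}f(θ)²dθ and u_e(r_0)²=β²+(η²/2π)∫₀^{2π}g(θ)²dθ. -/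
open Real MeasureTheory Filter Set

noncomputable section

/-- Partial derivative in the first (angular) variable. -/
def Dθ (u : ℝ → ℝ → ℝ) : ℝ → ℝ → ℝ := fun x y => deriv (fun t => u t y) x

/-- Partial derivative in the second (radial / boundary-layer) variable. -/
def Dr (u : ℝ → ℝ → ℝ) : ℝ → ℝ → ℝ := fun x y => deriv (fun s => u x s) y

/-- Joint smoothness of a function of two real variables. -/
def Smooth2 (u : ℝ → ℝ → ℝ) : Prop := ContDiff ℝ (⊤ : ℕ∞) (fun q : ℝ × ℝ => u q.1 q.2)

/-- `2π`-periodicity in the first (angular) variable. -/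
def Periodic2 (u : ℝ → ℝ → ℝ) : Prop := ∀ x y, u (x + 2 * π) y = u x y

/-- The profile `ũ_e(r) = ã₀ r + b̃₀/r + c̃₀ r ln r`. -/
def tildeU (ta tb tc : ℝ) : ℝ → ℝ := fun r => ta * r + tb / r + tc * r * Real.log r

/-- The shear Euler profile `u_{e,δ}(r) = a₀ r + b₀/r + δ ũ_e(r)`. -/
def shearProfile (a0 b0 δ ta tb tc : ℝ) : ℝ → ℝ :=
  fun r => a0 * r + b0 / r + δ * tildeU ta tb tc r

/-- Double integral over the annulus domain `Ω = [0,2π] × [r₀,1]`. -/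
def dblInt (r0 : ℝ) (F : ℝ → ℝ → ℝ) : ℝ :=
  ∫ r in r0..(1:ℝ), ∫ θ in (0:ℝ)..(2 * π), F θ r

/-- The nonlinear steady Prandtl system near the outer boundary `r = 1`
(boundary-layer variable `Y = (r-1)/ε ≤ 0`); `ue1` is the slip velocity `u_e(1)`. -/
def PrandtlOuter (ue1 α η : ℝ) (f : ℝ → ℝ) (u v : ℝ → ℝ → ℝ) : Prop :=
  Smooth2 u ∧ Smooth2 v ∧ Periodic2 u ∧ Periodic2 v ∧
  (∀ θ Y, Y ≤ 0 →
    (ue1 + u θ Y) * Dθ u θ Y + (v θ Y - v θ 0) * Dr u θ Y - Dr (Dr u) θ Y = 0) ∧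
  (∀ θ Y, Y ≤ 0 → Dθ u θ Y + Dr v θ Y = 0) ∧
  (∀ θ, u θ 0 = α + η * f θ - ue1) ∧
  (∀ θ, Tendsto (fun Y => u θ Y) atBot (nhds 0)) ∧
  (∀ θ, Tendsto (fun Y => v θ Y) atBot (nhds 0))

/-- The nonlinear steady Prandtl system near the inner boundary `r = r₀`
(boundary-layer variable `Z = (r-r₀)/ε ≥ 0`); `uer0` is the slip velocity `u_e(r₀)`. -/
def PrandtlInner (uer0 β η r0 : ℝ) (g : ℝ → ℝ) (u v : ℝ → ℝ → ℝ) : Prop :=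
  Smooth2 u ∧ Smooth2 v ∧ Periodic2 u ∧ Periodic2 v ∧
  (∀ θ Z, 0 ≤ Z →
    (uer0 + u θ Z) * Dθ u θ Z + (v θ Z - v θ 0) * (r0 * Dr u θ Z) - r0 * Dr (Dr u) θ Z = 0) ∧
  (∀ θ Z, 0 ≤ Z → Dθ u θ Z + r0 * Dr v θ Z = 0) ∧
  (∀ θ, u θ 0 = β + η * g θ - uer0) ∧
  (∀ θ, Tendsto (fun Z => u θ Z) atTop (nhds 0)) ∧
  (∀ θ, Tendsto (fun Z => v θ Z) atTop (nhds 0))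

/-- Fubini for continuous functions on rectangles. -/
lemma bw_swap (F : ℝ → ℝ → ℝ) (hF : Continuous fun p : ℝ × ℝ => F p.1 p.2) (a b c d : ℝ)
    (hab : a ≤ b) (hcd : c ≤ d) :
    ∫ x in a..b, ∫ y in c..d, F x y = ∫ y in c..d, ∫ x in a..b, F x y := by
  simp only [intervalIntegral.integral_of_le hab, intervalIntegral.integral_of_le hcd]
  apply integral_integral_swap
  rw [Measure.prod_restrict]
  have : IntegrableOn (fun p : ℝ × ℝ => F p.1 p.2) (Icc a b ×ˢ Icc c d) (volume.prod volume) :=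
    hF.continuousOn.integrableOn_compact (isCompact_Icc.prod isCompact_Icc)
  exact this.mono_set (Set.prod_mono Ioc_subset_Icc_self Ioc_subset_Icc_self)

/-- Derivative under the integral sign on a bounded interval. -/
lemma bw_deriv_under (U Ut : ℝ → ℝ → ℝ) (hU : Continuous fun p : ℝ × ℝ => U p.1 p.2)
    (hUt : Continuous fun p : ℝ × ℝ => Ut p.1 p.2)
    (h : ∀ x z, HasDerivAt (fun t => U t z) (Ut x z) x) (x z : ℝ) :
    HasDerivAt (fun t => ∫ s in (0:ℝ)..z, U t s) (∫ s in (0:ℝ)..z, Ut x s) x := by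
  obtain ⟨C, hC⟩ := ((isCompact_Icc (a := x - 1) (b := x + 1)).prod
    (isCompact_uIcc (a := (0:ℝ)) (b := z))).exists_bound_of_continuousOn hUt.continuousOn
  refine (intervalIntegral.hasDerivAt_integral_of_dominated_loc_of_deriv_le (F := U) (F' := Ut)
    (bound := fun _ => C) (s := Icc (x-1) (x+1)) (Icc_mem_nhds (by linarith) (by linarith))
    ?_ ?_ ?_ ?_ ?_ ?_).2
  · refine Eventually.of_forall fun t => Continuous.aestronglyMeasurable ?_
    exact hU.comp (Continuous.prodMk_right t)
  · exact (hU.comp (Continuous.prodMk_right x)).intervalIntegrable _ _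
  · exact Continuous.aestronglyMeasurable (hUt.comp (Continuous.prodMk_right x))
  · refine Eventually.of_forall fun t ht y hy => hC (y, t) ⟨hy, uIoc_subset_uIcc ht⟩
  · exact intervalIntegrable_const
  · exact Eventually.of_forall fun t ht y hy => h y t

/-- The weak von Mises identity. -/
lemma bw_core (κ L : ℝ) (hκ : κ ≠ 0) (hL : 0 ≤ L) (U Ut Uz Uzz V ψ : ℝ → ℝ → ℝ)
    (cU : Continuous fun p : ℝ × ℝ => U p.1 p.2)
    (cUt : Continuous fun p : ℝ × ℝ => Ut p.1 p.2)
    (cUz : Continuous fun p : ℝ × ℝ => Uz p.1 p.2)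
    (cUzz : Continuous fun p : ℝ × ℝ => Uzz p.1 p.2)
    (cV : Continuous fun p : ℝ × ℝ => V p.1 p.2)
    (cψ : Continuous fun p : ℝ × ℝ => ψ p.1 p.2)
    (dUt : ∀ x z, HasDerivAt (fun t => U t z) (Ut x z) x)
    (dUz : ∀ x z, HasDerivAt (fun s => U x s) (Uz x z) z)
    (dUzz : ∀ x z, HasDerivAt (fun s => Uz x s) (Uzz x z) z)
    (dV : ∀ x z, 0 ≤ z → HasDerivAt (fun s => V x s) (-Ut x z) z)
    (dψt : ∀ x z, 0 ≤ z → HasDerivAt (fun t => ψ t z) (-V x z) x)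
    (dψz : ∀ x z, HasDerivAt (fun s => ψ x s) (U x z) z)
    (V0 : ∀ x, V x 0 = 0) (ψ0 : ∀ x, ψ x 0 = 0)
    (pU : ∀ z, U (2 * π) z = U 0 z) (pψ : ∀ z, ψ (2 * π) z = ψ 0 z)
    (eqn : ∀ x z, 0 ≤ z → U x z * Ut x z + V x z * Uz x z = κ * Uzz x z)
    (φ φ1 φ2 : ℝ → ℝ) (dφ : ∀ s, HasDerivAt φ (φ1 s) s) (dφ1 : ∀ s, HasDerivAt φ1 (φ2 s) s)
    (cφ2 : Continuous φ2) (φ0 : φ 0 = 0) (φ10 : φ1 0 = 1)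
    (φL : ∀ x ∈ Icc 0 (2 * π), φ (ψ x L) = 0) (φ1L : ∀ x ∈ Icc 0 (2 * π), φ1 (ψ x L) = 0) :
    ∫ x in (0:ℝ)..(2 * π), ∫ z in (0:ℝ)..L, φ2 (ψ x z) * U x z ^ 3
      = - ∫ x in (0:ℝ)..(2 * π), U x 0 ^ 2 := by
  have hpi : (0:ℝ) ≤ 2 * π := by positivity
  have cφ : Continuous φ := continuous_iff_continuousAt.2 fun s => (dφ s).continuousAt
  have cφ1 : Continuous φ1 := continuous_iff_continuousAt.2 fun s => (dφ1 s).continuousAt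
  have cf := cφ.comp cψ
  have cf1 := cφ1.comp cψ
  have cf2 := cφ2.comp cψ
  simp only [Function.comp_def] at cf cf1 cf2
  -- Q = φ U^2 and its angular derivative
  set Qt : ℝ → ℝ → ℝ := fun x z =>
    (φ1 (ψ x z) * (-V x z)) * U x z ^ 2 + φ (ψ x z) * (2 * U x z * Ut x z) with hQt
  have cQt : Continuous fun p : ℝ × ℝ => Qt p.1 p.2 := by
    simp only [hQt]; fun_prop
  have dQ : ∀ x z, 0 ≤ z → HasDerivAt (fun t => φ (ψ t z) * U t z ^ 2) (Qt x z) x := by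
    intro x z hz
    have h1 := (dφ (ψ x z)).comp x (dψt x z hz)
    have h2 := h1.mul ((dUt x z).pow 2)
    refine h2.congr_deriv ?_
    simp [hQt]
  set P : ℝ → ℝ → ℝ := fun x z => κ * (φ1 (ψ x z) * U x z ^ 2) - 2 * κ * (φ (ψ x z) * Uz x z)
    + 2 * (φ (ψ x z) * (U x z * V x z)) with hP
  set Pz : ℝ → ℝ → ℝ := fun x z => κ * (φ2 (ψ x z) * U x z * U x z ^ 2
      + φ1 (ψ x z) * (2 * U x z * Uz x z))
    - 2 * κ * (φ1 (ψ x z) * U x z * Uz x z + φ (ψ x z) * Uzz x z)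
    + 2 * (φ1 (ψ x z) * U x z * (U x z * V x z)
      + φ (ψ x z) * (Uz x z * V x z + U x z * (-Ut x z))) with hPz
  have cPz : Continuous fun p : ℝ × ℝ => Pz p.1 p.2 := by
    simp only [hPz]; fun_prop
  have dP : ∀ x z, 0 ≤ z → HasDerivAt (fun s => P x s) (Pz x z) z := by
    intro x z hz
    have h1 := (dφ (ψ x z)).comp z (dψz x z)
    have h2 := (dφ1 (ψ x z)).comp z (dψz x z)
    have h3 := (((h2.mul ((dUz x z).pow 2)).const_mul κ).sub
      ((h1.mul (dUzz x z)).const_mul (2 * κ))).add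
      ((h1.mul ((dUz x z).mul (dV x z hz))).const_mul 2)
    refine h3.congr_deriv ?_
    simp [hPz]
  have key : ∀ x z, 0 ≤ z → κ * (φ2 (ψ x z) * U x z ^ 3) = Pz x z + 2 * Qt x z := by
    intro x z hz
    have := eqn x z hz
    simp only [hPz, hQt]
    linear_combination (-2 * φ (ψ x z)) * this
  have sl : ∀ (F : ℝ → ℝ → ℝ), (Continuous fun p : ℝ × ℝ => F p.1 p.2) → ∀ x,
      Continuous (F x) := fun F hF x => hF.comp (Continuous.prodMk_right x)
  have sl' : ∀ (F : ℝ → ℝ → ℝ), (Continuous fun p : ℝ × ℝ => F p.1 p.2) → ∀ z,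
      Continuous (fun x => F x z) := fun F hF x => hF.comp (Continuous.prodMk_left x)
  have par : ∀ (F : ℝ → ℝ → ℝ), (Continuous fun p : ℝ × ℝ => F p.1 p.2) →
      Continuous fun x => ∫ z in (0:ℝ)..L, F x z := fun F hF =>
    intervalIntegral.continuous_parametric_intervalIntegral_of_continuous' hF 0 L
  have iQ : ∫ x in (0:ℝ)..(2 * π), ∫ z in (0:ℝ)..L, Qt x z = 0 := by
    rw [bw_swap Qt cQt _ _ _ _ hpi hL]
    rw [intervalIntegral.integral_congr (g := fun _ => (0:ℝ))]
    · simp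
    intro z hz
    rw [uIcc_of_le hL] at hz
    simp only
    rw [intervalIntegral.integral_eq_sub_of_hasDerivAt (f := fun t => φ (ψ t z) * U t z ^ 2)
      (fun x _ => dQ x z hz.1) ((sl' Qt cQt z).intervalIntegrable _ _)]
    simp only [pU, pψ, sub_self]
  have iP : ∫ x in (0:ℝ)..(2 * π), ∫ z in (0:ℝ)..L, Pz x z
      = ∫ x in (0:ℝ)..(2 * π), -(κ * U x 0 ^ 2) := by
    apply intervalIntegral.integral_congr
    intro x hx
    rw [uIcc_of_le hpi] at hx
    simp only
    rw [intervalIntegral.integral_eq_sub_of_hasDerivAt (f := fun s => P x s)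
      (fun z hz => dP x z (by rw [uIcc_of_le hL] at hz; exact hz.1))
      ((sl Pz cPz x).intervalIntegrable _ _)]
    simp only [hP, φL x hx, φ1L x hx, ψ0, V0, φ0, φ10]
    ring
  have tot : κ * ∫ x in (0:ℝ)..(2 * π), ∫ z in (0:ℝ)..L, φ2 (ψ x z) * U x z ^ 3
      = (∫ x in (0:ℝ)..(2 * π), ∫ z in (0:ℝ)..L, Pz x z)
        + 2 * ∫ x in (0:ℝ)..(2 * π), ∫ z in (0:ℝ)..L, Qt x z := by
    rw [← intervalIntegral.integral_const_mul, ← intervalIntegral.integral_const_mul,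
      ← intervalIntegral.integral_add ((par Pz cPz).intervalIntegrable _ _)
        (((par Qt cQt).const_mul 2).intervalIntegrable _ _)]
    apply intervalIntegral.integral_congr
    intro x hx
    simp only
    rw [← intervalIntegral.integral_const_mul, ← intervalIntegral.integral_const_mul,
      ← intervalIntegral.integral_add ((sl Pz cPz x).intervalIntegrable _ _)
        (((sl Qt cQt x).const_mul 2).intervalIntegrable _ _)]
    apply intervalIntegral.integral_congr
    intro z hz
    rw [uIcc_of_le hL] at hz
    exact key x z hz.1
  rw [iQ, iP, intervalIntegral.integral_neg, intervalIntegral.integral_const_mul] at tot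
  apply mul_left_cancel₀ hκ
  rw [tot]; ring

/-- Powers of the positive part. -/
lemma bw_pos_pow (n : ℕ) (x : ℝ) :
    HasDerivAt (fun y : ℝ => (max 0 y) ^ (n + 2)) ((n + 2) * (max 0 x) ^ (n + 1)) x := by
  rcases lt_trichotomy x 0 with h | h | h
  · rw [max_eq_left h.le]
    have : (fun y : ℝ => (max 0 y) ^ (n + 2)) =ᶠ[nhds x] fun _ => 0 := by
      filter_upwards [Iio_mem_nhds h] with y hy
      rw [max_eq_left (le_of_lt hy)]; simp
    simpa using (hasDerivAt_const x (0:ℝ)).congr_of_eventuallyEq this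
  · subst h
    simp only [max_self, ne_eq, Nat.succ_ne_zero, not_false_eq_true, zero_pow, mul_zero]
    rw [hasDerivAt_iff_isLittleO_nhds_zero]
    have : (fun h : ℝ => h ^ (n+2)) =o[nhds 0] fun h : ℝ => h := by
      simpa using Asymptotics.isLittleO_pow_pow (𝕜 := ℝ) (m := 1) (n := n + 2) (by omega)
    refine (Asymptotics.IsBigO.trans_isLittleO ?_ this)
    refine Asymptotics.IsBigO.of_bound 1 (Eventually.of_forall fun y => ?_)
    simp only [zero_add, max_self, ne_eq, Nat.succ_ne_zero, not_false_eq_true, zero_pow, sub_zero,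
      smul_zero, norm_pow, one_mul]
    gcongr
    rw [Real.norm_eq_abs, Real.norm_eq_abs, abs_of_nonneg (le_max_left _ _)]
    exact max_le (abs_nonneg _) (le_abs_self _)
  · rw [max_eq_right h.le]
    have : (fun y : ℝ => (max 0 y) ^ (n + 2)) =ᶠ[nhds x] fun y => y ^ (n + 2) := by
      filter_upwards [Ioi_mem_nhds h] with y hy
      rw [max_eq_right (le_of_lt hy)]
    have h2 := (hasDerivAt_pow (n+2) x).congr_of_eventuallyEq this
    refine h2.congr_deriv ?_
    push_cast; rfl

/-- Limit of the one-dimensional remainder along each line `θ = const`. -/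
lemma bw_line (e B C R L : ℝ) (hR : 0 < R) (hL : 0 ≤ L) (U ψ : ℝ → ℝ)
    (cU : Continuous U) (dψ : ∀ z, HasDerivAt ψ (U z) z) (ψ0 : ψ 0 = 0)
    (pos : ∀ z, 0 ≤ z → 0 < U z) (bd : ∀ z, 0 ≤ z → U z ≤ B)
    (hC : ∀ z, 0 ≤ z → |U z ^ 2 - e ^ 2| ≤ C)
    (hLR : R ≤ ψ L) (ε Z : ℝ) (hε : 0 ≤ ε) (hZ : 0 ≤ Z)
    (hεZ : ∀ z, Z ≤ z → |U z ^ 2 - e ^ 2| ≤ ε) :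
    |(∫ z in (0:ℝ)..L, (6 * max 0 (1 - ψ z / R) - 12 * max 0 (1 - ψ z / R) ^ 2) / R * U z ^ 3)
      + e ^ 2| ≤ 3 * ε + 6 * B * C * Z / R := by
  have cψ : Continuous ψ := continuous_iff_continuousAt.2 fun s => (dψ s).continuousAt
  have ψmono : MonotoneOn ψ (Ici 0) := by
    apply monotoneOn_of_deriv_nonneg (convex_Ici 0) cψ.continuousOn
    · exact fun z _ => (dψ z).differentiableAt.differentiableWithinAt
    · intro z hz
      rw [interior_Ici] at hz
      rw [(dψ z).deriv]; exact (pos z (le_of_lt hz)).le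
  have ψnn : ∀ z, 0 ≤ z → 0 ≤ ψ z := fun z hz => by
    rw [← ψ0]; exact ψmono (by simp) hz hz
  set m : ℝ → ℝ := fun z => max 0 (1 - ψ z / R) with hm
  have cm : Continuous m := by simp only [hm]; fun_prop
  have m0 : m 0 = 1 := by simp [hm, ψ0]
  have mL : m L = 0 := by
    simp only [hm]; apply max_eq_left
    rw [sub_nonpos, le_div_iff₀ hR]; linarith
  have mnn : ∀ z, 0 ≤ m z := fun z => le_max_left _ _
  have mle : ∀ z, 0 ≤ z → m z ≤ 1 := fun z hz => by
    apply max_le zero_le_one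
    have := div_nonneg (ψnn z hz) hR.le
    linarith
  have din : ∀ z, HasDerivAt (fun z => 1 - ψ z / R) (-(U z / R)) z := fun z =>
    ((dψ z).div_const R).const_sub 1
  have dm2 : ∀ z, HasDerivAt (fun z => m z ^ 2) (2 * m z * (-(U z / R))) z := fun z => by
    have := (bw_pos_pow 0 (1 - ψ z / R)).comp z (din z)
    simpa [Function.comp_def, hm] using this
  have dm3 : ∀ z, HasDerivAt (fun z => m z ^ 3) (3 * m z ^ 2 * (-(U z / R))) z := fun z => by
    have := (bw_pos_pow 1 (1 - ψ z / R)).comp z (din z)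
    refine this.congr_deriv ?_
    simp only [hm]; norm_num
  -- mass of the kernel
  have I1 : ∫ z in (0:ℝ)..L, (6 * m z - 12 * m z ^ 2) / R * U z = -1 := by
    rw [intervalIntegral.integral_eq_sub_of_hasDerivAt (f := fun z => 4 * m z ^ 3 - 3 * m z ^ 2)]
    · simp only [mL, m0]; norm_num
    · intro z _
      refine (((dm3 z).const_mul 4).sub ((dm2 z).const_mul 3)).congr_deriv ?_
      field_simp; ring
    · exact Continuous.intervalIntegrable (by fun_prop) _ _
  have I2 : ∫ z in (0:ℝ)..L, 6 * m z / R * U z = 3 := by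
    rw [intervalIntegral.integral_eq_sub_of_hasDerivAt (f := fun z => (-3) * m z ^ 2)]
    · simp only [mL, m0]; norm_num
    · intro z _
      refine ((dm2 z).const_mul (-3)).congr_deriv ?_
      field_simp; ring
    · exact Continuous.intervalIntegrable (by fun_prop) _ _
  have B0 : 0 ≤ B := (pos 0 le_rfl).le.trans (bd 0 le_rfl)
  have C0 : 0 ≤ C := (abs_nonneg _).trans (hC 0 le_rfl)
  have split : (∫ z in (0:ℝ)..L, (6 * m z - 12 * m z ^ 2) / R * U z ^ 3) + e ^ 2
      = ∫ z in (0:ℝ)..L, (6 * m z - 12 * m z ^ 2) / R * U z * (U z ^ 2 - e ^ 2) := by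
    have : e ^ 2 = - (e^2 * ∫ z in (0:ℝ)..L, (6 * m z - 12 * m z ^ 2) / R * U z) := by
      rw [I1]; ring
    conv_lhs => rw [this]
    rw [← sub_eq_add_neg, ← intervalIntegral.integral_const_mul,
      ← intervalIntegral.integral_sub (Continuous.intervalIntegrable (by fun_prop) _ _)
      (Continuous.intervalIntegrable (by fun_prop) _ _)]
    congr 1; ext z; ring
  change |(∫ z in (0:ℝ)..L, (6 * m z - 12 * m z ^ 2) / R * U z ^ 3) + e ^ 2| ≤ _
  rw [split]
  have kb : ∀ z, 0 ≤ z → |(6 * m z - 12 * m z ^ 2) / R * U z * (U z ^ 2 - e ^ 2)|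
      ≤ 6 * m z / R * U z * |U z ^ 2 - e ^ 2| := by
    intro z hz
    rw [abs_mul, abs_mul, abs_div, abs_of_pos hR, abs_of_pos (pos z hz)]
    have h1 : |6 * m z - 12 * m z ^ 2| ≤ 6 * m z := by
      have a := mnn z
      have b := mle z hz
      rw [abs_le]; constructor <;> nlinarith
    have := (pos z hz).le
    gcongr
  have kb1 : ∀ z, 0 ≤ z → 6 * m z / R * U z * |U z ^ 2 - e ^ 2| ≤ 6 * B * C / R := by
    intro z hz
    have h1 := mle z hz
    have h2 := bd z hz
    have h3 := hC z hz
    have h4 := (pos z hz).le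
    have h5 := mnn z
    calc 6 * m z / R * U z * |U z ^ 2 - e ^ 2| ≤ 6 * 1 / R * B * C := by gcongr
      _ = _ := by ring
  have cA : Continuous fun z => 6 * m z / R * U z * |U z ^ 2 - e ^ 2| := by fun_prop
  have cW : Continuous fun z => 6 * m z / R * U z := by fun_prop
  have step1 : |∫ z in (0:ℝ)..L, (6 * m z - 12 * m z ^ 2) / R * U z * (U z ^ 2 - e ^ 2)|
      ≤ ∫ z in (0:ℝ)..L, 6 * m z / R * U z * |U z ^ 2 - e ^ 2| := by
    refine (intervalIntegral.abs_integral_le_integral_abs hL).trans ?_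
    apply intervalIntegral.integral_mono_on hL
    · exact Continuous.intervalIntegrable (by fun_prop) _ _
    · exact cA.intervalIntegrable _ _
    · exact fun z hz => kb z hz.1
  refine step1.trans ?_
  -- extend the domain of integration to pass `Z`
  set T := min Z L with hT
  have T0 : 0 ≤ T := le_min hZ hL
  have TL : T ≤ L := min_le_right _ _
  rw [← intervalIntegral.integral_add_adjacent_intervals (b := T) (cA.intervalIntegrable _ _)
    (cA.intervalIntegrable _ _)]
  have s2 : ∫ z in (0:ℝ)..T, 6 * m z / R * U z * |U z ^ 2 - e ^ 2| ≤ 6 * B * C * Z / R := by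
    calc _ ≤ ∫ z in (0:ℝ)..T, 6 * B * C / R :=
          intervalIntegral.integral_mono_on T0 (cA.intervalIntegrable _ _)
            intervalIntegrable_const (fun z hz => kb1 z hz.1)
      _ = T * (6 * B * C / R) := by rw [intervalIntegral.integral_const, sub_zero, smul_eq_mul]
      _ ≤ Z * (6 * B * C / R) := by gcongr; exact min_le_left _ _
      _ = _ := by ring
  have Wnn : ∀ z, 0 ≤ z → 0 ≤ 6 * m z / R * U z := fun z hz => by
    have := mnn z
    have := (pos z hz).le
    positivity
  have s3 : ∫ z in T..L, 6 * m z / R * U z * |U z ^ 2 - e ^ 2| ≤ 3 * ε := by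
    calc _ ≤ ∫ z in T..L, 6 * m z / R * U z * ε := by
          apply intervalIntegral.integral_mono_on TL (cA.intervalIntegrable _ _)
            ((cW.mul continuous_const).intervalIntegrable _ _)
          intro z hz
          have hz0 : 0 ≤ z := T0.trans hz.1
          rcases le_total Z L with h | h
          · have := hεZ z (by rw [hT, min_eq_left h] at hz; exact hz.1)
            exact mul_le_mul_of_nonneg_left this (Wnn z hz0)
          · have : z = L := by
              rw [hT, min_eq_right h] at hz; exact le_antisymm hz.2 hz.1
            have hm0 : m z = 0 := by rw [this]; exact mL
            have h0 : 6 * m z / R * U z = 0 := by rw [hm0]; ring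
            rw [h0, zero_mul]; exact mul_nonneg (Wnn z hz0) hε
      _ = (∫ z in T..L, 6 * m z / R * U z) * ε := by
          rw [intervalIntegral.integral_mul_const]
      _ ≤ 3 * ε := by
          gcongr
          have := intervalIntegral.integral_add_adjacent_intervals
            (cW.intervalIntegrable (μ := volume) 0 T) (cW.intervalIntegrable T L)
          have h0 : 0 ≤ ∫ z in (0:ℝ)..T, 6 * m z / R * U z :=
            intervalIntegral.integral_nonneg T0 fun z hz => Wnn z hz.1
          linarith
  linarith

/-- Normalized Batchelor–Wood formula on the half line `z ≥ 0`. -/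
lemma bw_general (κ e B : ℝ) (hκ : κ ≠ 0) (he : 0 < e) (U Ut Uz Uzz V : ℝ → ℝ → ℝ)
    (cU : Continuous fun p : ℝ × ℝ => U p.1 p.2)
    (cUt : Continuous fun p : ℝ × ℝ => Ut p.1 p.2)
    (cUz : Continuous fun p : ℝ × ℝ => Uz p.1 p.2)
    (cUzz : Continuous fun p : ℝ × ℝ => Uzz p.1 p.2)
    (cV : Continuous fun p : ℝ × ℝ => V p.1 p.2)
    (dUt : ∀ x z, HasDerivAt (fun t => U t z) (Ut x z) x)
    (dUz : ∀ x z, HasDerivAt (fun s => U x s) (Uz x z) z)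
    (dUzz : ∀ x z, HasDerivAt (fun s => Uz x s) (Uzz x z) z)
    (dV : ∀ x z, 0 ≤ z → HasDerivAt (fun s => V x s) (-Ut x z) z)
    (V0 : ∀ x, V x 0 = 0)
    (pU : ∀ z, U (2 * π) z = U 0 z)
    (eqn : ∀ x z, 0 ≤ z → U x z * Ut x z + V x z * Uz x z = κ * Uzz x z)
    (pos : ∀ x z, 0 ≤ z → 0 < U x z) (bd : ∀ x z, 0 ≤ z → U x z ≤ B)
    (lim : ∀ x, Tendsto (fun z => U x z) atTop (nhds e)) :
    ∫ x in (0:ℝ)..(2 * π), U x 0 ^ 2 = 2 * π * e ^ 2 := by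
  have hpi : (0:ℝ) ≤ 2 * π := by positivity
  set ψ : ℝ → ℝ → ℝ := fun x z => ∫ s in (0:ℝ)..z, U x s with hψ
  have slU : ∀ x, Continuous (U x) := fun x => cU.comp (Continuous.prodMk_right x)
  have slUt : ∀ x, Continuous (Ut x) := fun x => cUt.comp (Continuous.prodMk_right x)
  have cψ : Continuous fun p : ℝ × ℝ => ψ p.1 p.2 := by
    refine intervalIntegral.continuous_parametric_intervalIntegral_of_continuous (μ := volume)
      (f := fun (p : ℝ × ℝ) s => U p.1 s) (s := fun p : ℝ × ℝ => p.2) ?_ continuous_snd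
    simp only [Function.uncurry_def]
    exact cU.comp (by fun_prop : Continuous fun q : (ℝ × ℝ) × ℝ => (q.1.1, q.2))
  have dψz : ∀ x z, HasDerivAt (fun s => ψ x s) (U x z) z := fun x z =>
    intervalIntegral.integral_hasDerivAt_right ((slU x).intervalIntegrable _ _)
      ((slU x).stronglyMeasurableAtFilter _ _) (slU x).continuousAt
  have dψt : ∀ x z, 0 ≤ z → HasDerivAt (fun t => ψ t z) (-V x z) x := by
    intro x z hz
    refine (bw_deriv_under U Ut cU cUt dUt x z).congr_deriv ?_
    rw [intervalIntegral.integral_eq_sub_of_hasDerivAt (f := fun s => -V x s)]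
    · simp [V0]
    · intro s hs
      rw [uIcc_of_le hz] at hs
      exact (dV x s hs.1).neg.congr_deriv (neg_neg _)
    · exact (slUt x).intervalIntegrable _ _
  have ψ0 : ∀ x, ψ x 0 = 0 := fun x => by simp [hψ]
  have pψ : ∀ z, ψ (2 * π) z = ψ 0 z := fun z => by simp only [hψ, pU]
  have ψmono : ∀ x, MonotoneOn (ψ x) (Ici 0) := by
    intro x
    apply monotoneOn_of_deriv_nonneg (convex_Ici 0)
    · exact fun z _ => (dψz x z).continuousAt.continuousWithinAt
    · exact fun z _ => (dψz x z).differentiableAt.differentiableWithinAt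
    · intro z hz
      rw [interior_Ici] at hz
      rw [(dψz x z).deriv]; exact (pos x z (le_of_lt hz)).le
  -- the stream function is unbounded on each line
  have unb : ∀ x R, ∃ n : ℕ, R < ψ x n := by
    intro x R
    obtain ⟨Z, hZ⟩ := eventually_atTop.1 ((lim x).eventually (lt_mem_nhds (half_lt_self he)))
    set T := max Z 0 with hT
    have T0 : 0 ≤ T := le_max_right _ _
    obtain ⟨n, hn⟩ := exists_nat_gt (T + (|R| + 1) / (e / 2))
    have hnT : T ≤ n := by
      have : 0 ≤ (|R| + 1) / (e / 2) := by positivity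
      linarith
    refine ⟨n, ?_⟩
    have h1 : ψ x T + ∫ s in T..n, U x s = ψ x n :=
      intervalIntegral.integral_add_adjacent_intervals ((slU x).intervalIntegrable _ _)
        ((slU x).intervalIntegrable _ _)
    have h2 : 0 ≤ ψ x T := by
      rw [← ψ0 x]; exact ψmono x (by simp) T0 T0
    have h3 : (n - T) * (e / 2) ≤ ∫ s in T..n, U x s := by
      have : ∫ s in T..(n:ℝ), e / 2 = (n - T) * (e / 2) := by
        rw [intervalIntegral.integral_const, smul_eq_mul]
      rw [← this]
      apply intervalIntegral.integral_mono_on hnT intervalIntegrable_const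
        ((slU x).intervalIntegrable _ _)
      exact fun s hs => (hZ s ((le_max_left _ _).trans hs.1)).le
    have h4 : (|R| + 1) < (n - T) * (e / 2) := by
      rw [← div_lt_iff₀ (by positivity)]; linarith
    have := le_abs_self R
    linarith
  have unif : ∀ R, ∃ L : ℝ, 0 ≤ L ∧ ∀ x ∈ Icc 0 (2 * π), R ≤ ψ x L := by
    intro R
    obtain ⟨n, hn⟩ := (isCompact_Icc (a := (0:ℝ)) (b := 2 * π)).elim_directed_cover
      (fun n : ℕ => {x | R < ψ x n}) (fun n => isOpen_lt continuous_const
        (cψ.comp (Continuous.prodMk_left (n:ℝ))))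
      (fun x _ => mem_iUnion.2 (unb x R))
      (directed_of_isDirected_le (fun i j hij x hx => by
        have : ψ x i ≤ ψ x j := ψmono x (by simp) (by simp) (by exact_mod_cast hij)
        exact lt_of_lt_of_le hx this))
    exact ⟨n, by positivity, fun x hx => (hn hx).le⟩
  have main : ∀ R : ℝ, 0 < R → ∃ L : ℝ, 0 ≤ L ∧ (∀ x ∈ Icc 0 (2 * π), R ≤ ψ x L) ∧
      ∫ x in (0:ℝ)..(2 * π), ∫ z in (0:ℝ)..L,
        (6 * max 0 (1 - ψ x z / R) - 12 * max 0 (1 - ψ x z / R) ^ 2) / R * U x z ^ 3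
      = - ∫ x in (0:ℝ)..(2 * π), U x 0 ^ 2 := by
    intro R hR
    obtain ⟨L, hL, hLR⟩ := unif R
    refine ⟨L, hL, hLR, ?_⟩
    have din : ∀ s : ℝ, HasDerivAt (fun s => 1 - s / R) (-(1 / R)) s := fun s =>
      ((hasDerivAt_id s).div_const R).const_sub 1
    have dm2 : ∀ s, HasDerivAt (fun s => max 0 (1 - s / R) ^ 2)
        (2 * max 0 (1 - s / R) * (-(1 / R))) s := fun s => by
      have := (bw_pos_pow 0 (1 - s / R)).comp s (din s)
      simpa [Function.comp_def] using this
    have dm3 : ∀ s, HasDerivAt (fun s => max 0 (1 - s / R) ^ 3)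
        (3 * max 0 (1 - s / R) ^ 2 * (-(1 / R))) s := fun s => by
      have := (bw_pos_pow 1 (1 - s / R)).comp s (din s)
      refine this.congr_deriv ?_
      norm_num
    have dm4 : ∀ s, HasDerivAt (fun s => max 0 (1 - s / R) ^ 4)
        (4 * max 0 (1 - s / R) ^ 3 * (-(1 / R))) s := fun s => by
      have := (bw_pos_pow 2 (1 - s / R)).comp s (din s)
      refine this.congr_deriv ?_
      norm_num
    have mL : ∀ x ∈ Icc 0 (2 * π), max 0 (1 - ψ x L / R) = 0 := fun x hx => by
      apply max_eq_left
      rw [sub_nonpos, le_div_iff₀ hR]; linarith [hLR x hx]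
    refine bw_core κ L hκ hL U Ut Uz Uzz V ψ cU cUt cUz cUzz cV cψ dUt dUz dUzz dV dψt dψz V0 ψ0
      pU pψ eqn (fun s => R * (max 0 (1 - s / R) ^ 3 - max 0 (1 - s / R) ^ 4))
      (fun s => 4 * max 0 (1 - s / R) ^ 3 - 3 * max 0 (1 - s / R) ^ 2)
      (fun s => (6 * max 0 (1 - s / R) - 12 * max 0 (1 - s / R) ^ 2) / R) ?_ ?_ ?_ ?_ ?_ ?_ ?_
    · intro s
      refine (((dm3 s).sub (dm4 s)).const_mul R).congr_deriv ?_
      field_simp; ring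
    · intro s
      refine (((dm3 s).const_mul 4).sub ((dm2 s).const_mul 3)).congr_deriv ?_
      field_simp; ring
    · fun_prop
    · simp
    · norm_num
    · intro x hx; simp [mL x hx]
    · intro x hx; simp [mL x hx]
  choose! Lf hLf0 hLfR hLf using main
  set D : ℕ → ℝ → ℝ := fun n x => (∫ z in (0:ℝ)..(Lf (n + 1)),
        (6 * max 0 (1 - ψ x z / (n + 1)) - 12 * max 0 (1 - ψ x z / (n + 1)) ^ 2) / (n + 1)
          * U x z ^ 3) + e ^ 2 with hD
  have hn1 : ∀ n : ℕ, (0:ℝ) < n + 1 := fun n => by positivity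
  have cI : ∀ n : ℕ, Continuous fun x => ∫ z in (0:ℝ)..(Lf (n + 1)),
        (6 * max 0 (1 - ψ x z / (n + 1)) - 12 * max 0 (1 - ψ x z / (n + 1)) ^ 2) / (n + 1)
          * U x z ^ 3 := fun n => by
    apply intervalIntegral.continuous_parametric_intervalIntegral_of_continuous'
    simp only [Function.uncurry_def]
    have := (hn1 n).ne'
    fun_prop
  have cD : ∀ n, Continuous (D n) := fun n => (cI n).add continuous_const
  have iD : ∀ n, ∫ x in (0:ℝ)..(2 * π), D n x
      = 2 * π * e ^ 2 - ∫ x in (0:ℝ)..(2 * π), U x 0 ^ 2 := by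
    intro n
    simp only [hD]
    rw [intervalIntegral.integral_add ((cI n).intervalIntegrable _ _) intervalIntegrable_const,
      hLf _ (hn1 n)]
    simp; ring
  set C := B ^ 2 + e ^ 2 with hCdef
  have hC : ∀ x z, 0 ≤ z → |U x z ^ 2 - e ^ 2| ≤ C := by
    intro x z hz
    have h1 := pos x z hz
    have h2 := bd x z hz
    have h3 : U x z ^ 2 ≤ B ^ 2 := by gcongr
    rw [abs_le]; constructor <;> nlinarith [sq_nonneg (U x z), sq_nonneg e, sq_nonneg B]
  have est : ∀ n : ℕ, ∀ x ∈ Icc 0 (2 * π), ∀ ε Z, 0 ≤ ε → 0 ≤ Z →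
      (∀ z, Z ≤ z → |U x z ^ 2 - e ^ 2| ≤ ε) → |D n x| ≤ 3 * ε + 6 * B * C * Z / (n + 1) :=
    fun n x hx ε Z hε hZ h => bw_line e B C (n + 1) (Lf (n + 1)) (hn1 n) (hLf0 _ (hn1 n)) (U x)
      (ψ x) (slU x) (dψz x) (ψ0 x) (pos x) (bd x) (hC x) (hLfR _ (hn1 n) x hx) ε Z hε hZ h
  have T : Tendsto (fun n => ∫ x in (0:ℝ)..(2 * π), D n x) atTop
      (nhds (∫ x in (0:ℝ)..(2 * π), (0:ℝ))) := by
    apply intervalIntegral.tendsto_integral_filter_of_dominated_convergence (fun _ => 3 * C)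
    · exact Eventually.of_forall fun n => (cD n).aestronglyMeasurable
    · refine Eventually.of_forall fun n => Eventually.of_forall fun x hx => ?_
      rw [uIoc_of_le hpi] at hx
      have := est n x (Ioc_subset_Icc_self hx) C 0 (by positivity) le_rfl (hC x)
      simpa using this
    · exact intervalIntegrable_const
    · refine Eventually.of_forall fun x hx => ?_
      rw [uIoc_of_le hpi] at hx
      rw [Metric.tendsto_atTop]
      intro ε hε
      have l2 : Tendsto (fun z => U x z ^ 2 - e ^ 2) atTop (nhds 0) := by
        have h := ((lim x).pow 2).sub_const (e ^ 2)
        have h0 : e ^ 2 - e ^ 2 = 0 := by ring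
        exact h0 ▸ h
      obtain ⟨Z, hZ⟩ := Metric.tendsto_atTop.1 l2 (ε / 6) (by positivity)
      have b : ∀ n : ℕ, |D n x| ≤ 3 * (ε / 6) + 6 * B * C * (max Z 0) / (n + 1) := fun n =>
        est n x (Ioc_subset_Icc_self hx) (ε / 6) (max Z 0) (by positivity) (le_max_right _ _)
          (fun z hz => by
            have := hZ z ((le_max_left _ _).trans hz)
            rw [Real.dist_eq, sub_zero] at this
            exact this.le)
      have l3 : Tendsto (fun n : ℕ => 6 * B * C * (max Z 0) / ((n:ℝ) + 1)) atTop (nhds 0) :=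
        tendsto_const_nhds.div_atTop (tendsto_natCast_atTop_atTop.atTop_add tendsto_const_nhds)
      obtain ⟨N, hN⟩ := eventually_atTop.1 (l3.eventually (gt_mem_nhds (half_pos hε)))
      refine ⟨N, fun n hn => ?_⟩
      rw [Real.dist_eq, sub_zero]
      have := hN n hn
      have := b n
      linarith
  simp only [iD, intervalIntegral.integral_zero] at T
  have := tendsto_nhds_unique T tendsto_const_nhds
  linarith

lemma bw_Dθ {u : ℝ → ℝ → ℝ} (hu : Smooth2 u) (x y : ℝ) :
    HasDerivAt (fun t => u t y) (fderiv ℝ (fun q : ℝ × ℝ => u q.1 q.2) (x, y) (1, 0)) x := by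
  have h1 : HasFDerivAt (fun q : ℝ × ℝ => u q.1 q.2) _ (x, y) :=
    ((ContDiff.differentiable hu (by simp)) (x, y)).hasFDerivAt
  have h2 : HasDerivAt (fun t : ℝ => (t, y)) ((1:ℝ), (0:ℝ)) x :=
    (hasDerivAt_id x).prodMk (hasDerivAt_const x y)
  exact h1.comp_hasDerivAt x h2

lemma bw_Dr {u : ℝ → ℝ → ℝ} (hu : Smooth2 u) (x y : ℝ) :
    HasDerivAt (fun t => u x t) (fderiv ℝ (fun q : ℝ × ℝ => u q.1 q.2) (x, y) (0, 1)) y := by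
  have h1 : HasFDerivAt (fun q : ℝ × ℝ => u q.1 q.2) _ (x, y) :=
    ((ContDiff.differentiable hu (by simp)) (x, y)).hasFDerivAt
  have h2 : HasDerivAt (fun t : ℝ => (x, t)) ((0:ℝ), (1:ℝ)) y :=
    (hasDerivAt_const y x).prodMk (hasDerivAt_id y)
  exact h1.comp_hasDerivAt y h2

lemma bw_hasDθ {u : ℝ → ℝ → ℝ} (hu : Smooth2 u) (x y : ℝ) :
    HasDerivAt (fun t => u t y) (Dθ u x y) x :=
  (bw_Dθ hu x y).differentiableAt.hasDerivAt

lemma bw_hasDr {u : ℝ → ℝ → ℝ} (hu : Smooth2 u) (x y : ℝ) :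
    HasDerivAt (fun t => u x t) (Dr u x y) y :=
  (bw_Dr hu x y).differentiableAt.hasDerivAt

lemma bw_smoothDθ {u : ℝ → ℝ → ℝ} (hu : Smooth2 u) : Smooth2 (Dθ u) := by
  have h : (fun q : ℝ × ℝ => Dθ u q.1 q.2)
      = fun q => fderiv ℝ (fun q : ℝ × ℝ => u q.1 q.2) q (1, 0) := by
    ext q; exact (bw_Dθ hu q.1 q.2).deriv
  unfold Smooth2
  rw [h]
  exact (ContDiff.fderiv_right hu (by simp)).clm_apply contDiff_const

lemma bw_smoothDr {u : ℝ → ℝ → ℝ} (hu : Smooth2 u) : Smooth2 (Dr u) := by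
  have h : (fun q : ℝ × ℝ => Dr u q.1 q.2)
      = fun q => fderiv ℝ (fun q : ℝ × ℝ => u q.1 q.2) q (0, 1) := by
    ext q; exact (bw_Dr hu q.1 q.2).deriv
  unfold Smooth2
  rw [h]
  exact (ContDiff.fderiv_right hu (by simp)).clm_apply contDiff_const

lemma bw_cont {u : ℝ → ℝ → ℝ} (hu : Smooth2 u) : Continuous fun q : ℝ × ℝ => u q.1 q.2 :=
  ContDiff.continuous hu

lemma bw_contneg {u : ℝ → ℝ → ℝ} (hu : Smooth2 u) :
    Continuous fun q : ℝ × ℝ => u q.1 (-q.2) :=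
  (bw_cont hu).comp (by fun_prop : Continuous fun q : ℝ × ℝ => (q.1, -q.2))

lemma bw_cont0 {u : ℝ → ℝ → ℝ} (hu : Smooth2 u) :
    Continuous fun q : ℝ × ℝ => u q.1 0 :=
  (bw_cont hu).comp (by fun_prop : Continuous fun q : ℝ × ℝ => (q.1, (0:ℝ)))

lemma bw_negDr {u : ℝ → ℝ → ℝ} (hu : Smooth2 u) (x z : ℝ) :
    HasDerivAt (fun s => u x (-s)) (-Dr u x (-z)) z := by
  have := (bw_hasDr hu x (-z)).comp z (hasDerivAt_neg z)
  exact this.congr_deriv (by ring)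

/-- Evaluation of the boundary integral. -/
lemma bw_boundary (a η e : ℝ) (f : ℝ → ℝ) (hf : Continuous f)
    (hmean : (∫ θ in (0:ℝ)..(2 * π), f θ) = 0)
    (h : ∫ θ in (0:ℝ)..(2 * π), (a + η * f θ) ^ 2 = 2 * π * e ^ 2) :
    e ^ 2 = a ^ 2 + η ^ 2 / (2 * π) * ∫ θ in (0:ℝ)..(2 * π), (f θ) ^ 2 := by
  have h1 : ∫ θ in (0:ℝ)..(2 * π), (a + η * f θ) ^ 2
      = ∫ θ in (0:ℝ)..(2 * π), (a ^ 2 + ((2 * a * η) * f θ + η ^ 2 * f θ ^ 2)) := by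
    congr 1; ext θ; ring
  rw [h1, intervalIntegral.integral_add intervalIntegrable_const
    (Continuous.intervalIntegrable (by fun_prop) _ _),
    intervalIntegral.integral_add (Continuous.intervalIntegrable (by fun_prop) _ _)
    (Continuous.intervalIntegrable (by fun_prop) _ _),
    intervalIntegral.integral_const_mul, intervalIntegral.integral_const_mul, hmean,
    intervalIntegral.integral_const, smul_eq_mul] at h
  have := Real.pi_pos
  field_simp
  linarith

lemma bw_outer (e α η M : ℝ) (he : 0 < e) (f : ℝ → ℝ) (hf : Continuous f)
    (hmean : (∫ θ in (0:ℝ)..(2 * π), f θ) = 0) (u v : ℝ → ℝ → ℝ)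
    (hP : PrandtlOuter e α η f u v) (hpos : ∀ θ Y : ℝ, Y ≤ 0 → 0 < e + u θ Y)
    (hb : ∀ θ Y : ℝ, Y ≤ 0 → u θ Y ≤ M) :
    e ^ 2 = α ^ 2 + η ^ 2 / (2 * π) * ∫ θ in (0:ℝ)..(2 * π), (f θ) ^ 2 := by
  obtain ⟨su, sv, pu, pv, eq1, eq2, bc, lu, lv⟩ := hP
  apply bw_boundary α η e f hf hmean
  have := bw_general 1 e (e + M) one_ne_zero he (fun x z => e + u x (-z))
    (fun x z => Dθ u x (-z)) (fun x z => -Dr u x (-z)) (fun x z => Dr (Dr u) x (-z))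
    (fun x z => -(v x (-z) - v x 0))
    (continuous_const.add (bw_contneg su)) (bw_contneg (bw_smoothDθ su))
    (bw_contneg (bw_smoothDr su)).neg (bw_contneg (bw_smoothDr (bw_smoothDr su)))
    ((bw_contneg sv).sub (bw_cont0 sv)).neg
    (fun x z => (bw_hasDθ su x (-z)).const_add e)
    (fun x z => (bw_negDr su x z).const_add e)
    (fun x z => (bw_negDr (bw_smoothDr su) x z).neg.congr_deriv (neg_neg _))
    (fun x z hz => ((bw_negDr sv x z).sub_const _).neg.congr_deriv (by
      have := eq2 x (-z) (by linarith); linarith))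
    (fun x => by simp)
    (fun z => by have := pu 0 (-z); rw [zero_add] at this; simp only [this])
    (fun x z hz => by have := eq1 x (-z) (by linarith); linarith)
    (fun x z hz => hpos x (-z) (by linarith))
    (fun x z hz => by have := hb x (-z) (by linarith); linarith)
    (fun x => by simpa using ((lu x).comp tendsto_neg_atTop_atBot).const_add e)
  rw [← this]
  congr 1; ext x
  rw [neg_zero, bc]; ring

lemma bw_inner (e β η r0 M : ℝ) (hr0 : 0 < r0) (he : 0 < e) (f : ℝ → ℝ) (hf : Continuous f)
    (hmean : (∫ θ in (0:ℝ)..(2 * π), f θ) = 0) (u v : ℝ → ℝ → ℝ)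
    (hP : PrandtlInner e β η r0 f u v) (hpos : ∀ θ Y : ℝ, 0 ≤ Y → 0 < e + u θ Y)
    (hb : ∀ θ Y : ℝ, 0 ≤ Y → u θ Y ≤ M) :
    e ^ 2 = β ^ 2 + η ^ 2 / (2 * π) * ∫ θ in (0:ℝ)..(2 * π), (f θ) ^ 2 := by
  obtain ⟨su, sv, pu, pv, eq1, eq2, bc, lu, lv⟩ := hP
  apply bw_boundary β η e f hf hmean
  have := bw_general r0 e (e + M) hr0.ne' he (fun x z => e + u x z)
    (Dθ u) (Dr u) (Dr (Dr u)) (fun x z => r0 * (v x z - v x 0))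
    (continuous_const.add (bw_cont su)) (bw_cont (bw_smoothDθ su))
    (bw_cont (bw_smoothDr su)) (bw_cont (bw_smoothDr (bw_smoothDr su)))
    (((bw_cont sv).sub (bw_cont0 sv)).const_mul r0)
    (fun x z => (bw_hasDθ su x z).const_add e)
    (fun x z => (bw_hasDr su x z).const_add e)
    (fun x z => bw_hasDr (bw_smoothDr su) x z)
    (fun x z hz => (((bw_hasDr sv x z).sub_const _).const_mul r0).congr_deriv (by
      have := eq2 x z hz; linarith))
    (fun x => by simp)
    (fun z => by have := pu 0 z; rw [zero_add] at this; simp only [this])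
    (fun x z hz => by have := eq1 x z hz; linarith)
    hpos
    (fun x z hz => by have := hb x z hz; linarith)
    (fun x => by simpa using (lu x).const_add e)
  rw [← this]
  congr 1; ext x
  rw [bc]; ring

/-- **Batchelor–Wood formula.**  If the steady Prandtl systems near `r = 1` and `r = r₀`
admit solutions with positive total tangential velocity, bounded uniformly by `M`, and the
boundary data `f, g` have zero mean, then the slip velocities of the limiting Euler flow are
determined: `u_e(1)² = α² + (η²/2π)∫f²` and `u_e(r₀)² = β² + (η²/2π)∫g²`. -/
theorem batchelor_wood_formula
    (r0 α β η : ℝ) (hr0 : 0 < r0) (hr01 : r0 < 1) (hα : 0 < α) (hβ : 0 < β)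
    (f g : ℝ → ℝ) (hf : ContDiff ℝ (⊤ : ℕ∞) f) (hg : ContDiff ℝ (⊤ : ℕ∞) g)
    (hfper : ∀ θ, f (θ + 2 * π) = f θ) (hgper : ∀ θ, g (θ + 2 * π) = g θ)
    (hfmean : (∫ θ in (0:ℝ)..(2 * π), f θ) = 0)
    (hgmean : (∫ θ in (0:ℝ)..(2 * π), g θ) = 0)
    (ue : ℝ → ℝ) (hue : ContDiff ℝ (⊤ : ℕ∞) ue) (huepos : ∀ r ∈ Icc r0 1, 0 < ue r)
    (up vp : ℝ → ℝ → ℝ) (hP1 : PrandtlOuter (ue 1) α η f up vp)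
    (uq vq : ℝ → ℝ → ℝ) (hP2 : PrandtlInner (ue r0) β η r0 g uq vq)
    (hpos1 : ∀ θ Y : ℝ, Y ≤ 0 → 0 < ue 1 + up θ Y)
    (hpos2 : ∀ θ Z : ℝ, 0 ≤ Z → 0 < ue r0 + uq θ Z)
    (M : ℝ) (hM : 0 < M)
    (hbdd : ∀ θ θ' Y Z : ℝ, Y ≤ 0 → 0 ≤ Z → |up θ Y| + |uq θ' Z| ≤ M) :
    (ue 1) ^ 2 = α ^ 2 + η ^ 2 / (2 * π) * ∫ θ in (0:ℝ)..(2 * π), (f θ) ^ 2 ∧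
    (ue r0) ^ 2 = β ^ 2 + η ^ 2 / (2 * π) * ∫ θ in (0:ℝ)..(2 * π), (g θ) ^ 2 := by
  refine ⟨bw_outer (ue 1) α η M (huepos 1 ⟨hr01.le, le_rfl⟩) f hf.continuous hfmean up vp hP1 hpos1
      fun θ Y hY => ?_, bw_inner (ue r0) β η r0 M hr0 (huepos r0 ⟨le_rfl, hr01.le⟩) g hg.continuous
      hgmean uq vq hP2 hpos2 fun θ Z hZ => ?_⟩
  · have h1 := hbdd θ 0 Y 0 hY le_rfl
    have h2 := le_abs_self (up θ Y)
    have h3 := abs_nonneg (uq 0 0)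
    linarith
  · have h1 := hbdd 0 θ 0 Z le_rfl hZ
    have h2 := le_abs_self (uq θ Z)
    have h3 := abs_nonneg (up 0 0)
    linarith
end
end

section
/- If (ū_e^{(1)},v̄_e^{(1)}) solves the first-order linearized Euler system u_e(r)∂_θū_e^{(1)}+r v̄_e^{(1)}u_e'(r)+u_e(r)v̄_e^{(1)}+∂_θp̄_e^{(1)}=0, u_e(r)∂_θv̄_e^{(1)}−2u_e(r)ū_e^{(1)}+r∂_rp̄_e^{(1)}=0, ∂_θū_e^{(1)}+r∂_rv̄_e^{(1)}+v̄_e^{(1)}=0 on [0,2π]×[r_0,1] with ∫₀^{2π}v̄_e^{(1)}(θ,r)dθ=0 for all r, then ∫₀^{2π}[ū_e^{(1)}∂_θū_e^{(1)}+v̄_e^{(1)}r∂_rū_e^{(1)}+ū_e^{(1)}v̄_e^{(1)}](θ,r)dθ=0 for every r∈[r_0,1]. (This is the necessary solvability condition for the second-order linearized Euler system.) -/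
open Real MeasureTheory Filter Set

noncomputable section

/-- The first-order linearized Euler system around the rotating shear flow `(u_e(r), 0)`
on the annulus `[0,2π] × [r₀,1]`. -/
def LinEuler1 (r0 : ℝ) (ue : ℝ → ℝ) (u v p : ℝ → ℝ → ℝ) : Prop :=
  (∀ θ r, r ∈ Icc r0 1 →
    ue r * Dθ u θ r + r * v θ r * deriv ue r + ue r * v θ r + Dθ p θ r = 0) ∧
  (∀ θ r, r ∈ Icc r0 1 →
    ue r * Dθ v θ r - 2 * ue r * u θ r + r * Dr p θ r = 0) ∧
  (∀ θ r, r ∈ Icc r0 1 → Dθ u θ r + r * Dr v θ r + v θ r = 0)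

open scoped ContDiff

lemma hasDθ {u : ℝ → ℝ → ℝ} (h : Smooth2 u) (x y : ℝ) :
    HasDerivAt (fun t => u t y) (fderiv ℝ (fun q : ℝ × ℝ => u q.1 q.2) (x, y) (1, 0)) x := by
  have h1 : HasFDerivAt (fun q : ℝ × ℝ => u q.1 q.2) _ (x, y) :=
    ((ContDiff.differentiable h (by simp)) (x, y)).hasFDerivAt
  have h2 : HasDerivAt (fun t : ℝ => (t, y)) ((1 : ℝ), (0 : ℝ)) x :=
    (hasDerivAt_id x).prodMk (hasDerivAt_const x y)
  exact h1.comp_hasDerivAt x h2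

lemma hasDr {u : ℝ → ℝ → ℝ} (h : Smooth2 u) (x y : ℝ) :
    HasDerivAt (fun s => u x s) (fderiv ℝ (fun q : ℝ × ℝ => u q.1 q.2) (x, y) (0, 1)) y := by
  have h1 : HasFDerivAt (fun q : ℝ × ℝ => u q.1 q.2) _ (x, y) :=
    ((ContDiff.differentiable h (by simp)) (x, y)).hasFDerivAt
  have h2 : HasDerivAt (fun t : ℝ => (x, t)) ((0 : ℝ), (1 : ℝ)) y :=
    (hasDerivAt_const y x).prodMk (hasDerivAt_id y)
  exact h1.comp_hasDerivAt y h2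

lemma Dθ_eq {u : ℝ → ℝ → ℝ} (h : Smooth2 u) (x y : ℝ) :
    Dθ u x y = fderiv ℝ (fun q : ℝ × ℝ => u q.1 q.2) (x, y) (1, 0) := (hasDθ h x y).deriv

lemma Dr_eq {u : ℝ → ℝ → ℝ} (h : Smooth2 u) (x y : ℝ) :
    Dr u x y = fderiv ℝ (fun q : ℝ × ℝ => u q.1 q.2) (x, y) (0, 1) := (hasDr h x y).deriv

lemma hasDθ' {u : ℝ → ℝ → ℝ} (h : Smooth2 u) (x y : ℝ) :
    HasDerivAt (fun t => u t y) (Dθ u x y) x := by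
  rw [Dθ_eq h]; exact hasDθ h x y

lemma hasDr' {u : ℝ → ℝ → ℝ} (h : Smooth2 u) (x y : ℝ) :
    HasDerivAt (fun t => u x t) (Dr u x y) y := by
  rw [Dr_eq h]; exact hasDr h x y

lemma smooth_fderiv {u : ℝ → ℝ → ℝ} (h : Smooth2 u) :
    ContDiff ℝ (⊤ : ℕ∞) (fderiv ℝ (fun q : ℝ × ℝ => u q.1 q.2)) :=
  ContDiff.fderiv_right h (by norm_cast)

lemma smoothDθ {u : ℝ → ℝ → ℝ} (h : Smooth2 u) : Smooth2 (Dθ u) := by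
  have : (fun q : ℝ × ℝ => Dθ u q.1 q.2)
      = fun q => fderiv ℝ (fun q : ℝ × ℝ => u q.1 q.2) q (1, 0) := by
    funext q; exact Dθ_eq h q.1 q.2
  unfold Smooth2
  rw [this]
  exact (smooth_fderiv h).clm_apply contDiff_const

lemma smoothDr {u : ℝ → ℝ → ℝ} (h : Smooth2 u) : Smooth2 (Dr u) := by
  have : (fun q : ℝ × ℝ => Dr u q.1 q.2)
      = fun q => fderiv ℝ (fun q : ℝ × ℝ => u q.1 q.2) q (0, 1) := by
    funext q; exact Dr_eq h q.1 q.2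
  unfold Smooth2
  rw [this]
  exact (smooth_fderiv h).clm_apply contDiff_const

lemma clm_aux (G : ℝ × ℝ → (ℝ × ℝ →L[ℝ] ℝ)) (G' : ℝ × ℝ →L[ℝ] (ℝ × ℝ →L[ℝ] ℝ))
    (c : ℝ → ℝ × ℝ) (c' e : ℝ × ℝ) (t : ℝ) (hG : HasFDerivAt G G' (c t))
    (hc : HasDerivAt c c' t) : HasDerivAt (fun s => G (c s) e) (G' c' e) t := by
  have h3 := (hG.comp_hasDerivAt t hc).clm_apply (hasDerivAt_const t e)
  have h4 : G' c' e = (G' c') e + (G ∘ c) t 0 := by rw [map_zero, add_zero]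
  rw [h4]
  exact h3

lemma D_symm {u : ℝ → ℝ → ℝ} (h : Smooth2 u) (x y : ℝ) :
    Dr (Dθ u) x y = Dθ (Dr u) x y := by
  have hf := fun z w : ℝ => (((smooth_fderiv h).differentiable (by simp)) (z, w)).hasFDerivAt
  have hs : IsSymmSndFDerivAt ℝ (fun q : ℝ × ℝ => u q.1 q.2) (x, y) :=
    ContDiffAt.isSymmSndFDerivAt (ContDiff.contDiffAt h) (by simp; exact WithTop.coe_le_coe.2 (le_top : (2 : ℕ∞) ≤ ⊤))
  have h1 : Dr (Dθ u) x y
      = fderiv ℝ (fderiv ℝ (fun q : ℝ × ℝ => u q.1 q.2)) (x, y) (0, 1) (1, 0) := by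
    have h2 : HasDerivAt (fun t : ℝ => (x, t)) ((0 : ℝ), (1 : ℝ)) y :=
      (hasDerivAt_const y x).prodMk (hasDerivAt_id y)
    have h3 := clm_aux _ _ _ _ ((1 : ℝ), (0 : ℝ)) y (hf x y) h2
    have h4 : (fun s => Dθ u x s) = fun s => fderiv ℝ (fun q : ℝ × ℝ => u q.1 q.2) (x, s) (1, 0) := by
      funext s; exact Dθ_eq h x s
    show deriv (fun s => Dθ u x s) y = _
    rw [h4]
    exact h3.deriv
  have h1' : Dθ (Dr u) x y
      = fderiv ℝ (fderiv ℝ (fun q : ℝ × ℝ => u q.1 q.2)) (x, y) (1, 0) (0, 1) := by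
    have h2 : HasDerivAt (fun t : ℝ => (t, y)) ((1 : ℝ), (0 : ℝ)) x :=
      (hasDerivAt_id x).prodMk (hasDerivAt_const x y)
    have h3 := clm_aux _ _ _ _ ((0 : ℝ), (1 : ℝ)) x (hf x y) h2
    have h4 : (fun s => Dr u s y) = fun s => fderiv ℝ (fun q : ℝ × ℝ => u q.1 q.2) (s, y) (0, 1) := by
      funext s; exact Dr_eq h s y
    show deriv (fun s => Dr u s y) x = _
    rw [h4]
    exact h3.deriv
  rw [h1, h1']
  exact hs _ _

lemma cont1 {u : ℝ → ℝ → ℝ} (h : Smooth2 u) (y : ℝ) : Continuous (fun t => u t y) :=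
  (ContDiff.continuous h).comp (Continuous.prodMk continuous_id continuous_const)

lemma int_self_deriv (f f' : ℝ → ℝ) (hf : ∀ x, HasDerivAt f (f' x) x) (hc : Continuous f')
    (hp : f (2 * π) = f 0) : ∫ x in (0:ℝ)..(2 * π), f x * f' x = 0 := by
  have hcf : Continuous f := continuous_iff_continuousAt.2 fun x => (hf x).continuousAt
  have := intervalIntegral.integral_eq_sub_of_hasDerivAt (a := 0) (b := 2 * π)
    (f := fun x => f x * f x / 2) (f' := fun x => f x * f' x)
    (fun x _ => by
      have h1 := ((hf x).mul (hf x)).div_const 2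
      have h2 : f x * f' x = (f' x * f x + f x * f' x) / 2 := by ring
      rw [h2]
      exact h1)
    ((hcf.mul hc).intervalIntegrable _ _)
  rw [this, hp]; ring

/-- A function vanishing on `[r0,1]` has zero derivative there. -/
lemma deriv_zero_of_Icc {r0 : ℝ} (h01 : r0 < 1) (F : ℝ → ℝ) (F' r : ℝ) (hr : r ∈ Icc r0 1)
    (hF : ∀ s ∈ Icc r0 1, F s = 0) (hd : HasDerivAt F F' r) : F' = 0 := by
  have h1 : HasDerivWithinAt F F' (Icc r0 1) r := hd.hasDerivWithinAt
  have h2 : HasDerivWithinAt F 0 (Icc r0 1) r :=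
    (hasDerivWithinAt_const r (Icc r0 1) (0:ℝ)).congr hF (hF r hr)
  exact (uniqueDiffOn_Icc h01 r hr).eq_deriv _ h1 h2

/-- Linearized vorticity equation. -/
lemma vorticity {r0 : ℝ} (h01 : r0 < 1)
    (ue : ℝ → ℝ) (hue : ContDiff ℝ (⊤ : ℕ∞) ue) (u v p : ℝ → ℝ → ℝ)
    (hsu : Smooth2 u) (hsv : Smooth2 v) (hsp : Smooth2 p)
    (heq : LinEuler1 r0 ue u v p) (θ r : ℝ) (hr : r ∈ Icc r0 1) :
    ue r * (r * Dθ (Dr u) θ r + Dθ u θ r - Dθ (Dθ v) θ r)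
      = - (r * (2 * deriv ue r + r * deriv (deriv ue) r) - (ue r + r * deriv ue r)) * v θ r := by
  obtain ⟨e1, e2, e3⟩ := heq
  have hue1 : HasDerivAt ue (deriv ue r) r := (hue.differentiable (by simp) r).hasDerivAt
  have hue2 : HasDerivAt (deriv ue) (deriv (deriv ue) r) r := by
    have : ContDiff ℝ (⊤ : ℕ∞) (deriv ue) := by
      have := hue.iterate_deriv 1
      simpa using this
    exact (this.differentiable (by simp) r).hasDerivAt
  have d1 := deriv_zero_of_Icc h01 _ _ r hr (fun s hs => e1 θ s hs)
    ((((hue1.mul (hasDr' (smoothDθ hsu) θ r)).add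
      (((hasDerivAt_id r).mul (hasDr' hsv θ r)).mul hue2)).add (hue1.mul (hasDr' hsv θ r))).add
      (hasDr' (smoothDθ hsp) θ r))
  have d2 : ue r * Dθ (Dθ v) θ r - 2 * ue r * Dθ u θ r + r * Dθ (Dr p) θ r = 0 := by
    have h := (((hasDθ' (smoothDθ hsv) θ r).const_mul (ue r)).sub
      ((hasDθ' hsu θ r).const_mul (2 * ue r))).add ((hasDθ' (smoothDr hsp) θ r).const_mul r)
    have h0 : HasDerivAt (fun t => ue r * Dθ v t r - 2 * ue r * u t r + r * Dr p t r) 0 θ := by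
      simp only [e2 _ r hr]; exact hasDerivAt_const _ _
    exact h.unique h0
  rw [D_symm hsp, D_symm hsu] at d1
  have e := e3 θ r hr
  simp only [id, Pi.mul_apply] at d1
  linear_combination r * d1 - d2 - (r * deriv ue r + ue r) * e

/-- **Necessary solvability condition for the second-order linearized Euler system.**
If `(ū_e⁽¹⁾, v̄_e⁽¹⁾, p̄_e⁽¹⁾)` is a smooth `2π`-periodic solution of the first-order
linearized Euler system around the positive shear flow `u_e(r)` on `[0,2π] × [r₀,1]`,
with `∫₀^{2π} v̄_e⁽¹⁾(θ,r) dθ = 0` for all `r`, then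
`∫₀^{2π} [ū_e⁽¹⁾ ∂_θ ū_e⁽¹⁾ + v̄_e⁽¹⁾ r ∂_r ū_e⁽¹⁾ + ū_e⁽¹⁾ v̄_e⁽¹⁾] dθ = 0`
for every `r ∈ [r₀,1]`. -/
theorem second_order_euler_solvability_condition
    (r0 : ℝ) (hr0 : 0 < r0) (hr01 : r0 < 1)
    (ue : ℝ → ℝ) (hue : ContDiff ℝ (⊤ : ℕ∞) ue) (huepos : ∀ r ∈ Icc r0 1, 0 < ue r)
    (u v p : ℝ → ℝ → ℝ)
    (hsu : Smooth2 u) (hsv : Smooth2 v) (hsp : Smooth2 p)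
    (hpu : Periodic2 u) (hpv : Periodic2 v) (hpp : Periodic2 p)
    (heq : LinEuler1 r0 ue u v p)
    (hvzero : ∀ r ∈ Icc r0 1, (∫ θ in (0:ℝ)..(2 * π), v θ r) = 0) :
    ∀ r ∈ Icc r0 1,
      (∫ θ in (0:ℝ)..(2 * π),
        (u θ r * Dθ u θ r + v θ r * (r * Dr u θ r) + u θ r * v θ r)) = 0 := by
  intro r hr
  have hw : ∀ θ, HasDerivAt (fun t => r * Dr u t r + u t r - Dθ v t r)
      (r * Dθ (Dr u) θ r + Dθ u θ r - Dθ (Dθ v) θ r) θ := fun θ =>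
    (((hasDθ' (smoothDr hsu) θ r).const_mul r).add (hasDθ' hsu θ r)).sub
      (hasDθ' (smoothDθ hsv) θ r)
  have hvort := fun θ => vorticity hr01 ue hue u v p hsu hsv hsp heq θ r hr
  set K := r * (2 * deriv ue r + r * deriv (deriv ue) r) - (ue r + r * deriv ue r) with hK
  set w : ℝ → ℝ := fun t => r * Dr u t r + u t r - Dθ v t r with hwdef
  have cu := cont1 hsu r
  have cv := cont1 hsv r
  have cuθ := cont1 (smoothDθ hsu) r
  have cvθ := cont1 (smoothDθ hsv) r
  have cw : Continuous w := continuous_iff_continuousAt.2 fun x => (hw x).continuousAt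
  have cw' : Continuous (fun θ => r * Dθ (Dr u) θ r + Dθ u θ r - Dθ (Dθ v) θ r) :=
    ((continuous_const.mul (cont1 (smoothDθ (smoothDr hsu)) r)).add cuθ).sub
      (cont1 (smoothDθ (smoothDθ hsv)) r)
  have pu : u (2 * π) r = u 0 r := by simpa using hpu 0 r
  have pv : v (2 * π) r = v 0 r := by simpa using hpv 0 r
  have pur : Dr u (2 * π) r = Dr u 0 r := by
    have : (fun s => u (2 * π) s) = fun s => u 0 s := by
      funext s; simpa using hpu 0 s
    simp only [Dr, this]
  have pvθ : Dθ v (2 * π) r = Dθ v 0 r := by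
    have h1 := deriv_comp_add_const (fun t => v t r) (2 * π) 0
    have h2 : (fun t => v (t + 2 * π) r) = fun t => v t r := by
      funext t; exact hpv t r
    rw [h2] at h1
    simp only [Dθ]
    rw [h1]; simp
  have pw : w (2 * π) = w 0 := by simp only [hwdef, pu, pur, pvθ]
  have I1 := int_self_deriv _ _ (fun x => hasDθ' hsu x r) cuθ pu
  have I2 := int_self_deriv _ _ (fun x => hasDθ' hsv x r) cvθ pv
  have I3 := int_self_deriv _ _ hw cw' pw
  have I4 : ∫ θ in (0:ℝ)..(2 * π), v θ r * w θ = 0 := by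
    by_cases hk : K = 0
    · have hconst : ∀ θ, w θ = w 0 := fun θ =>
        is_const_of_deriv_eq_zero (fun x => (hw x).differentiableAt) (fun x => by
          rw [(hw x).deriv]
          have := hvort x
          rw [hk] at this
          have hne := (huepos r hr).ne'
          simpa [hne] using this) θ 0
      simp only [hconst]
      rw [intervalIntegral.integral_mul_const, hvzero r hr, zero_mul]
    · have : (fun θ => v θ r * w θ) = fun θ => (-(ue r) / K) *
          (w θ * (r * Dθ (Dr u) θ r + Dθ u θ r - Dθ (Dθ v) θ r)) := by
        funext θ
        field_simp
        linear_combination (w θ) * hvort θ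
      rw [this, intervalIntegral.integral_const_mul, I3, mul_zero]
  have hsplit : (fun θ => u θ r * Dθ u θ r + v θ r * (r * Dr u θ r) + u θ r * v θ r)
      = fun θ => (u θ r * Dθ u θ r + v θ r * w θ) + v θ r * Dθ v θ r := by
    funext θ; simp only [hwdef]; ring
  have i1 : IntervalIntegrable (fun θ => u θ r * Dθ u θ r) volume 0 (2 * π) :=
    (cu.mul cuθ).intervalIntegrable _ _
  have i2 : IntervalIntegrable (fun θ => v θ r * w θ) volume 0 (2 * π) :=
    (cv.mul cw).intervalIntegrable _ _
  have i3 : IntervalIntegrable (fun θ => v θ r * Dθ v θ r) volume 0 (2 * π) :=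
    (cv.mul cvθ).intervalIntegrable _ _
  rw [hsplit, intervalIntegral.integral_add (i1.add i2) i3,
    intervalIntegral.integral_add i1 i2, I1, I2, I4]
  simp
end
end
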